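/- Let C be a nonzero linear code of dimension k over a finite field. The sequence of generalized Hamming weights d_1(C), d_2(C), ..., d_k(C) is strictly increasing: d_v(C) < d_{v+1}(C) for all 1 ≤ v ≤ k-1. -/

import Mathlib

/-!
Given a subcode `D` of dimension `v + 1` and smallest support, choose `i` in its support. The words
of `D` vanishing at `i` form the kernel of a nonzero functional on `D`, hence a subcode of dimension
`v`, and its support is smaller because it misses `i`.
-/

open Module

section Semiring

variable {R M ι : Type*} [Semiring R]

lemma exists_submodule_le_finrank_eq [StrongRankCondition R] [AddCommMonoid M] [Module R M]
    {N : Submodule R M} {n : ℕ} (hn : n ≤ finrank R N) : ∃ D ≤ N, finrank R D = n := by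
  have := nontrivial_of_invariantBasisNumber R
  obtain ⟨b, hb⟩ := exists_linearIndependent_of_le_finrank hn
  refine ⟨(Submodule.span R (Set.range b)).map N.subtype, N.map_subtype_le _, ?_⟩
  rw [Submodule.finrank_map_subtype_eq, finrank_span_eq_card hb, Fintype.card_fin]

/-- The support of a linear code `D`: the positions at which some codeword is nonzero. -/
def codeSupport (D : Submodule R (ι → R)) : Set ι :=
  {i | ∃ c ∈ D, c i ≠ 0}

lemma codeSupport_mono {D E : Submodule R (ι → R)} (h : D ≤ E) : codeSupport D ⊆ codeSupport E :=
  fun _ ⟨c, hc, hci⟩ ↦ ⟨c, h hc, hci⟩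

lemma codeSupport_nonempty {D : Submodule R (ι → R)} (hD : D ≠ ⊥) : (codeSupport D).Nonempty := by
  obtain ⟨c, hc, hc0⟩ := D.exists_mem_ne_zero_of_ne_bot hD
  obtain ⟨i, hi⟩ := Function.ne_iff.mp hc0
  exact ⟨i, c, hc, hi⟩

/-- The shortening of the code `D` at the position `i`: the subcode of the words that vanish at `i`.
The position `i` is kept, so that the result is a subcode of `D`. -/
def shortenedCode (D : Submodule R (ι → R)) (i : ι) : Submodule R (ι → R) :=
  D ⊓ LinearMap.ker (LinearMap.proj i)

lemma shortenedCode_le (D : Submodule R (ι → R)) (i : ι) : shortenedCode D i ≤ D :=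
  inf_le_left

lemma notMem_codeSupport_shortenedCode (D : Submodule R (ι → R)) (i : ι) :
    i ∉ codeSupport (shortenedCode D i) :=
  fun ⟨_, hc, hci⟩ ↦ hci hc.2

lemma codeSupport_shortenedCode_ssubset {D : Submodule R (ι → R)} {i : ι}
    (hi : i ∈ codeSupport D) : codeSupport (shortenedCode D i) ⊂ codeSupport D :=
  (codeSupport_mono (shortenedCode_le D i)).ssubset_of_mem_notMem hi
    (notMem_codeSupport_shortenedCode D i)

/-- The `v`-th generalized Hamming weight `d_v(C)`: the least size of the support of a
`v`-dimensional subcode of `C`. It has the junk value `0` if there is no such subcode,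
and infinite supports count as having size `0`. -/
noncomputable def generalizedHammingWeight (C : Submodule R (ι → R)) (v : ℕ) : ℕ :=
  sInf {t | ∃ D ≤ C, finrank R D = v ∧ t = (codeSupport D).ncard}

lemma generalizedHammingWeight_le_ncard {C D : Submodule R (ι → R)} (hD : D ≤ C) :
    generalizedHammingWeight C (finrank R D) ≤ (codeSupport D).ncard :=
  Nat.sInf_le ⟨D, hD, rfl, rfl⟩

lemma exists_generalizedHammingWeight_eq_ncard [StrongRankCondition R]
    {C : Submodule R (ι → R)} {v : ℕ} (hv : v ≤ finrank R C) :
    ∃ D ≤ C, finrank R D = v ∧ generalizedHammingWeight C v = (codeSupport D).ncard := by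
  obtain ⟨D, hDC, hDv⟩ := exists_submodule_le_finrank_eq hv
  exact Nat.sInf_mem (s := {t | ∃ D ≤ C, finrank R D = v ∧ t = (codeSupport D).ncard})
    ⟨_, D, hDC, hDv, rfl⟩

end Semiring

section DivisionRing

variable {K V ι : Type*} [DivisionRing K]

lemma finrank_inf_ker_add_one [AddCommGroup V] [Module K V] {D : Submodule K V} [Module.Finite K D]
    {f : V →ₗ[K] K} {x : V} (hx : x ∈ D) (hfx : f x ≠ 0) :
    finrank K (D ⊓ LinearMap.ker f : Submodule K V) + 1 = finrank K D := by
  have hf : f.domRestrict D ≠ 0 := fun h ↦ hfx (LinearMap.congr_fun h ⟨x, hx⟩)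
  rw [← Dual.finrank_ker_add_one_of_ne_zero hf, LinearMap.ker_domRestrict,
    ← Submodule.map_comap_subtype, Submodule.finrank_map_subtype_eq]

lemma finrank_shortenedCode_add_one {D : Submodule K (ι → K)} [Module.Finite K D] {i : ι}
    (hi : i ∈ codeSupport D) : finrank K (shortenedCode D i) + 1 = finrank K D := by
  obtain ⟨c, hc, hci⟩ := hi
  exact finrank_inf_ker_add_one hc hci

lemma generalizedHammingWeight_lt_succ [Finite ι] {C : Submodule K (ι → K)} {v : ℕ}
    (hv : v < finrank K C) :
    generalizedHammingWeight C v < generalizedHammingWeight C (v + 1) := by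
  obtain ⟨D, hDC, hDv, hD⟩ := exists_generalizedHammingWeight_eq_ncard (Nat.succ_le_of_lt hv)
  have hD_ne_bot : D ≠ ⊥ := Submodule.one_le_finrank_iff.mp (by lia)
  obtain ⟨i, hi⟩ := codeSupport_nonempty hD_ne_bot
  have hfinrank : finrank K (shortenedCode D i) = v :=
    Nat.succ_injective ((finrank_shortenedCode_add_one hi).trans hDv)
  calc generalizedHammingWeight C v
      = generalizedHammingWeight C (finrank K (shortenedCode D i)) := by rw [hfinrank]
    _ ≤ (codeSupport (shortenedCode D i)).ncard :=
      generalizedHammingWeight_le_ncard ((shortenedCode_le D i).trans hDC)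
    _ < (codeSupport D).ncard := Set.ncard_lt_ncard (codeSupport_shortenedCode_ssubset hi)
    _ = generalizedHammingWeight C (v + 1) := hD.symm

theorem generalized_hamming_weights_strictly_increasing_general [Finite ι]
    (C : Submodule K (ι → K)) :
    StrictMonoOn (generalizedHammingWeight C) (Set.Iic (finrank K C)) :=
  strictMonoOn_Iic_of_lt_succ fun _ hv ↦ generalizedHammingWeight_lt_succ hv

end DivisionRing

theorem generalized_hamming_weights_strictly_increasing
    (F : Type*) [Field F] [Fintype F] (nn k : ℕ)
    (C : Submodule F (Fin nn → F))
    (hk : Module.finrank F C = k) (hk0 : k ≠ 0) :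
    ∀ v : ℕ, 1 ≤ v → v ≤ k - 1 →
      sInf {t : ℕ | ∃ D : Submodule F (Fin nn → F), D ≤ C ∧
          Module.finrank F D = v ∧
          t = {i : Fin nn | ∃ c ∈ D, c i ≠ 0}.ncard} <
      sInf {t : ℕ | ∃ D : Submodule F (Fin nn → F), D ≤ C ∧
          Module.finrank F D = v + 1 ∧
          t = {i : Fin nn | ∃ c ∈ D, c i ≠ 0}.ncard} := by
  intro v _ hv
  exact generalized_hamming_weights_strictly_increasing_general C
    (Set.mem_Iic.mpr (by lia)) (Set.mem_Iic.mpr (by lia)) v.lt_succ_self
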